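/- arXiv:1909.10623 — 2 statements merged into one kernel-verified Lean document; each statement's English description precedes it below -/
import Mathlib

section
/- Let φ : S¹ → ℝ² be a continuous injective map from the circle into the plane, and let γ = range(φ) be the corresponding Jordan curve. Then the complement ℝ² ∖ γ has exactly two connected components: exactly one of them is bounded (the interior of γ) and exactly one of them is unbounded (the exterior of γ). -/
/-!
A nonvanishing continuous function either has a continuous logarithm or winds. If the curve is cut
at two points `a` and `b`, then `(z - b) / (z - a)` has a logarithm off each of the two arcs. Were
the complement of the curve connected, these logarithms would differ there by a constant, so they
would glue to a logarithm on `ℂ \ {a, b}`, where the function winds around `a`.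

Conversely, on a Jordan curve winding is measured by a single integer, so for any `p`, `q` off the
curve some `(z - p) ^ m / (z - q) ^ n` with `(m, n) ≠ (0, 0)` has a logarithm on it. If `p` and `q`
lay in different bounded components, extending that logarithm over the component of `p` would
replace `(z - p) ^ m` there by a nonvanishing function, whence `m = 0`; likewise `n = 0`.
-/

open Bornology Function Metric Set Topology
open scoped Real unitInterval

section Components

variable {X : Type*} [TopologicalSpace X]

theorem isPreconnected_of_subsingleton_connectedComponentIn {S : Set X}
    (h : (connectedComponentIn S '' S).Subsingleton) : IsPreconnected S := by
  refine isPreconnected_of_forall_pair fun x hx y hy ↦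
    ⟨connectedComponentIn S x, connectedComponentIn_subset S x, mem_connectedComponentIn hx, ?_,
      isPreconnected_connectedComponentIn⟩
  rw [h (mem_image_of_mem _ hx) (mem_image_of_mem _ hy)]
  exact mem_connectedComponentIn hy

theorem disjoint_frontier_connectedComponentIn [LocallyConnectedSpace X] {S : Set X}
    (hS : IsOpen S) (x : X) : Disjoint (frontier (connectedComponentIn S x)) S := by
  refine disjoint_left.2 fun y hy hyS ↦ ?_
  rw [hS.connectedComponentIn.frontier_eq] at hy
  obtain ⟨z, hzy, hzx⟩ := mem_closure_iff.1 hy.1 _ hS.connectedComponentIn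
    (mem_connectedComponentIn hyS)
  have heq : connectedComponentIn S x = connectedComponentIn S y :=
    (connectedComponentIn_eq hzx).trans (connectedComponentIn_eq hzy).symm
  exact hy.2 (heq ▸ mem_connectedComponentIn hyS)

theorem connectedComponentIn_image_homeomorph {Y : Type*} [TopologicalSpace Y] (e : X ≃ₜ Y)
    (S : Set X) :
    connectedComponentIn (e '' S) '' (e '' S) = image e '' (connectedComponentIn S '' S) := by
  simp only [image_image]
  exact image_congr fun x hx ↦ (e.image_connectedComponentIn hx).symm

variable {E : Type*} [NormedAddCommGroup E] [NormedSpace ℝ E]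

theorem isPreconnected_compl_closedBall (hE : 1 < Module.rank ℝ E) (x : E) {r : ℝ} (hr : 0 ≤ r) :
    IsPreconnected (closedBall x r)ᶜ := by
  have himage : (closedBall x r)ᶜ = (fun p : E × ℝ ↦ x + p.2 • p.1) '' (sphere 0 1 ×ˢ Ioi r) := by
    ext y
    simp only [mem_compl_iff, mem_closedBall, not_le, dist_eq_norm, mem_image, mem_prod,
      mem_sphere_zero_iff_norm, mem_Ioi, Prod.exists]
    constructor
    · intro hy
      have hpos : ‖y - x‖ ≠ 0 := (hr.trans_lt hy).ne'
      exact ⟨‖y - x‖⁻¹ • (y - x), ‖y - x‖, ⟨by simp [norm_smul, hpos], hy⟩,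
        by simp [smul_inv_smul₀ hpos]⟩
    · rintro ⟨u, t, ⟨hu, ht⟩, rfl⟩
      simpa [norm_smul, hu] using ht.trans_le (le_abs_self t)
  rw [himage]
  exact ((isPreconnected_sphere hE 0 1).prod isPreconnected_Ioi).image _ (by fun_prop)

theorem existsUnique_not_isBounded_connectedComponentIn_compl (hE : 1 < Module.rank ℝ E)
    {K : Set E} (hK : IsBounded K) :
    ∃! C, C ∈ connectedComponentIn Kᶜ '' Kᶜ ∧ ¬IsBounded C := by
  have : Nontrivial E := rank_pos_iff_nontrivial.1 (zero_lt_one.trans hE)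
  obtain ⟨R, hR, hKR⟩ := hK.subset_closedBall_lt 0 0
  have hsub : (closedBall 0 R)ᶜ ⊆ Kᶜ := compl_subset_compl.2 hKR
  have hunbounded : ¬IsBounded (closedBall (0 : E) R)ᶜ := fun h ↦
    NormedSpace.unbounded_univ ℝ E (union_compl_self (closedBall (0 : E) R) ▸
      isBounded_closedBall.union h)
  obtain ⟨q, hq⟩ : (closedBall (0 : E) R)ᶜ.Nonempty :=
    nonempty_iff_ne_empty.2 fun h ↦ hunbounded (h ▸ isBounded_empty)
  have hqsub : (closedBall 0 R)ᶜ ⊆ connectedComponentIn Kᶜ q :=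
    (isPreconnected_compl_closedBall hE 0 hR.le).subset_connectedComponentIn hq hsub
  refine ⟨_, ⟨mem_image_of_mem _ (hsub hq), fun h ↦ hunbounded (h.subset hqsub)⟩, ?_⟩
  rintro _ ⟨⟨z, -, rfl⟩, hz⟩
  obtain ⟨w, hwz, hw⟩ : ∃ w ∈ connectedComponentIn Kᶜ z, w ∉ closedBall 0 R :=
    not_subset.1 fun h ↦ hz (isBounded_closedBall.subset h)
  exact (connectedComponentIn_eq hwz).trans (connectedComponentIn_eq (hqsub hw)).symm

end Components

/-- `f` has a continuous logarithm on `S`: a function continuous on `S`, with arbitrary values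
elsewhere, whose exponential agrees with `f` there. For nonvanishing continuous `f` this says that
the class of `f` in `H¹(S; ℤ)` is trivial. -/
def HasLogOn {X : Type*} [TopologicalSpace X] (f : X → ℂ) (S : Set X) : Prop :=
  ∃ L : X → ℂ, ContinuousOn L S ∧ EqOn (Complex.exp ∘ L) f S

namespace HasLogOn

variable {X Y : Type*} [TopologicalSpace X] [TopologicalSpace Y] {f g : X → ℂ} {S T : Set X}

theorem congr (hf : HasLogOn f S) (h : EqOn f g S) : HasLogOn g S :=
  let ⟨L, hL, hLf⟩ := hf
  ⟨L, hL, hLf.trans h⟩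

theorem mono (hf : HasLogOn f T) (h : S ⊆ T) : HasLogOn f S :=
  let ⟨L, hL, hLf⟩ := hf
  ⟨L, hL.mono h, hLf.mono h⟩

theorem comp {φ : Y → X} {R : Set Y} (hf : HasLogOn f S) (hφ : ContinuousOn φ R)
    (hmaps : MapsTo φ R S) : HasLogOn (f ∘ φ) R :=
  let ⟨L, hL, hLf⟩ := hf
  ⟨L ∘ φ, hL.comp hφ hmaps, fun _ hy ↦ hLf (hmaps hy)⟩

theorem const {c : ℂ} (hc : c ≠ 0) : HasLogOn (fun _ : X ↦ c) S :=
  ⟨fun _ ↦ Complex.log c, continuousOn_const, fun _ _ ↦ Complex.exp_log hc⟩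

theorem of_mem_slitPlane (hf : ContinuousOn f S) (h : MapsTo f S Complex.slitPlane) :
    HasLogOn f S :=
  ⟨fun x ↦ Complex.log (f x), hf.clog h, fun _ hx ↦
    Complex.exp_log (Complex.slitPlane_ne_zero (h hx))⟩

theorem mul (hf : HasLogOn f S) (hg : HasLogOn g S) : HasLogOn (fun x ↦ f x * g x) S := by
  obtain ⟨⟨L, hL, hLf⟩, M, hM, hMg⟩ := hf, hg
  refine ⟨fun x ↦ L x + M x, hL.add hM, fun x hx ↦ ?_⟩
  simp only [comp_apply, Complex.exp_add, ← hLf hx, ← hMg hx]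

theorem zpow (hf : HasLogOn f S) (n : ℤ) : HasLogOn (fun x ↦ f x ^ n) S := by
  obtain ⟨L, hL, hLf⟩ := hf
  refine ⟨fun x ↦ n * L x, continuousOn_const.mul hL, fun x hx ↦ ?_⟩
  simp only [comp_apply, Complex.exp_int_mul, ← hLf hx]

theorem inv (hf : HasLogOn f S) : HasLogOn (fun x ↦ (f x)⁻¹) S := by
  simpa only [zpow_neg_one] using hf.zpow (-1)

theorem div (hf : HasLogOn f S) (hg : HasLogOn g S) : HasLogOn (fun x ↦ f x / g x) S := by
  simpa only [div_eq_mul_inv] using hf.mul hg.inv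

end HasLogOn

section Logarithms

variable {X Y : Type*} [TopologicalSpace X] [TopologicalSpace Y]

theorem exists_int_eq_add_of_exp_eqOn {S : Set X} (hS : IsPreconnected S) {L M : X → ℂ}
    (hL : ContinuousOn L S) (hM : ContinuousOn M S)
    (h : EqOn (Complex.exp ∘ L) (Complex.exp ∘ M) S) :
    ∃ n : ℤ, ∀ x ∈ S, L x = M x + n * (2 * π * Complex.I) := by
  rcases S.eq_empty_or_nonempty with rfl | ⟨a, ha⟩
  · simp
  obtain ⟨n, hn⟩ := Complex.exp_eq_exp_iff_exists_int.1 (h ha)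
  refine ⟨n, Complex.isCoveringMap_exp.eqOn_of_comp_eqOn hS hL (hM.add continuousOn_const)
    (fun x hx ↦ Subtype.ext ?_) ha hn⟩
  exact (h hx).trans (Complex.exp_eq_exp_iff_exists_int.2 ⟨-n, by push_cast; ring⟩)

theorem HasLogOn.union_of_isOpen {f : X → ℂ} {U V : Set X} (hfU : HasLogOn f U)
    (hfV : HasLogOn f V) (hU : IsOpen U) (hV : IsOpen V) (hUV : IsPreconnected (U ∩ V)) :
    HasLogOn f (U ∪ V) := by
  classical
  obtain ⟨⟨L, hL, hLf⟩, M, hM, hMf⟩ := hfU, hfV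
  obtain ⟨n, hn⟩ := exists_int_eq_add_of_exp_eqOn hUV (hL.mono inter_subset_left)
    (hM.mono inter_subset_right)
    ((hLf.mono inter_subset_left).trans (hMf.mono inter_subset_right).symm)
  have hpieceU : EqOn (U.piecewise L fun x ↦ M x + n * (2 * π * Complex.I)) L U :=
    piecewise_eqOn _ _ _
  have hpieceV : EqOn (U.piecewise L fun x ↦ M x + n * (2 * π * Complex.I))
      (fun x ↦ M x + n * (2 * π * Complex.I)) V := fun x hxV ↦ by
    by_cases hxU : x ∈ U
    · exact (hpieceU hxU).trans (hn x ⟨hxU, hxV⟩)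
    · exact piecewise_eq_of_notMem _ _ _ hxU
  refine ⟨U.piecewise L fun x ↦ M x + n * (2 * π * Complex.I),
    (hL.congr hpieceU).union_of_isOpen ((hM.add continuousOn_const).congr hpieceV) hU hV, ?_⟩
  rintro x (hx | hx)
  · simpa only [comp_apply, hpieceU hx] using hLf hx
  · simpa only [comp_apply, hpieceV hx, Complex.exp_periodic.int_mul n (M x)] using hMf hx

theorem HasLogOn.exists_continuousMap [NormalSpace X] {f : X → ℂ} {K : Set X}
    (hf : HasLogOn f K) (hK : IsClosed K) : ∃ L : C(X, ℂ), EqOn (Complex.exp ∘ L) f K := by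
  obtain ⟨L, hL, hLf⟩ := hf
  obtain ⟨M, hM⟩ := ContinuousMap.exists_restrict_eq hK ⟨K.domRestrict L, hL.domRestrict⟩
  have hML : EqOn M L K := fun x hx ↦ DFunLike.congr_fun hM ⟨x, hx⟩
  exact ⟨M, fun x hx ↦ (congrArg Complex.exp (hML hx)).trans (hLf hx)⟩

theorem HasLogOn.image {f : Y → ℂ} {φ : X → Y} {S : Set X} (h : HasLogOn (f ∘ φ) S)
    (hφ : IsEmbedding φ) : HasLogOn f (φ '' S) := by
  obtain ⟨L, hL, hLf⟩ := h
  rcases isEmpty_or_nonempty X with hX | hX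
  · exact ⟨0, continuousOn_const, by simp [eq_empty_of_isEmpty S]⟩
  have hinv : LeftInverse (invFun φ) φ := leftInverse_invFun hφ.injective
  refine ⟨L ∘ invFun φ, hφ.isInducing.continuousOn_image_iff.2 ?_, ?_⟩
  · simpa only [comp_assoc, hinv.comp_eq_id, comp_id] using hL
  · rintro _ ⟨x, hx, rfl⟩
    simpa only [comp_apply, hinv x] using hLf hx

theorem hasLogOn_univ [SimplyConnectedSpace X] [LocallyPathConnectedSpace X] {f : X → ℂ}
    (hf : Continuous f) (hf₀ : ∀ x, f x ≠ 0) : HasLogOn f univ := by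
  obtain ⟨a⟩ := (inferInstance : Nonempty X)
  obtain ⟨L, ⟨-, hL⟩, -⟩ := Complex.isCoveringMapOn_exp.existsUnique_continuousMap_lifts
    ⟨f, hf⟩ (Complex.exp_log (hf₀ a)) hf₀
  exact ⟨L, L.continuous.continuousOn, fun x _ ↦ congrFun hL x⟩

theorem HasLogOn.of_homotopy {S : Set X} {F : I → X → ℂ}
    (hF : ContinuousOn (uncurry F) (univ ×ˢ S)) (hF₀ : ∀ t, ∀ x ∈ S, F t x ≠ 0)
    (h : HasLogOn (F 0) S) : HasLogOn (F 1) S := by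
  obtain ⟨L, hL, hLF⟩ := h
  let H : C(I × S, {z : ℂ // z ≠ 0}) :=
    ⟨fun p ↦ ⟨F p.1 p.2, hF₀ _ _ p.2.2⟩, Continuous.subtype_mk
      (hF.comp_continuous (f := fun p : I × S ↦ (p.1, (p.2 : X))) (by fun_prop)
        fun p ↦ ⟨mem_univ _, p.2.2⟩) _⟩
  obtain ⟨M, hM⟩ : ∃ M : C(I × S, ℂ), ∀ p, Complex.exp (M p) = F p.1 p.2 :=
    ⟨Complex.isCoveringMap_exp.liftHomotopy H ⟨S.domRestrict L, hL.domRestrict⟩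
      fun x ↦ Subtype.ext (hLF x.2).symm, fun p ↦
      congrArg Subtype.val (congrFun (Complex.isCoveringMap_exp.liftHomotopy_lifts H _ _) p)⟩
  have hM₁ : HasLogOn (F 1 ∘ ((↑) : S → X)) univ :=
    ⟨fun x ↦ M (1, x), by fun_prop, fun x _ ↦ hM (1, x)⟩
  simpa only [image_univ, Subtype.range_coe] using hM₁.image IsEmbedding.subtypeVal

end Logarithms

section Circle

theorem eq_zero_of_hasLogOn_circle_zpow {n : ℤ}
    (h : HasLogOn (fun z : Circle ↦ (z : ℂ) ^ n) univ) : n = 0 := by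
  obtain ⟨L, hL, hLn⟩ := h
  rw [continuousOn_univ] at hL
  obtain ⟨k, hk⟩ := exists_int_eq_add_of_exp_eqOn (L := fun θ : ℝ ↦ L (Circle.exp θ))
    (M := fun θ : ℝ ↦ n * (θ * Complex.I)) isPreconnected_univ (by fun_prop) (by fun_prop)
    fun θ _ ↦ (hLn (mem_univ _)).trans (by simp [Complex.exp_int_mul])
  have hloop : n * (((2 * π : ℝ) : ℂ) * Complex.I) = n * (((0 : ℝ) : ℂ) * Complex.I) :=
    add_right_cancel <| (hk (2 * π) (mem_univ _)).symm.trans <|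
      (congrArg L (by simp)).trans (hk 0 (mem_univ _))
  simpa [Real.pi_ne_zero] using hloop

theorem exists_hasLogOn_div_circle_zpow {F : Circle → ℂ} (hF : Continuous F)
    (hF₀ : ∀ z, F z ≠ 0) : ∃ n : ℤ, HasLogOn (fun z ↦ F z / (z : ℂ) ^ n) univ := by
  obtain ⟨L, hL, hLF⟩ := hasLogOn_univ (hF.comp Circle.exp.continuous) fun θ ↦ hF₀ _
  rw [continuousOn_univ] at hL
  obtain ⟨n, hn⟩ := exists_int_eq_add_of_exp_eqOn (L := fun θ ↦ L (θ + 2 * π)) isPreconnected_univ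
    (by fun_prop) hL.continuousOn fun θ _ ↦
      (hLF (mem_univ _)).trans <|
        (congrArg F (Circle.exp_add_two_pi θ)).trans (hLF (mem_univ θ)).symm
  let M : C(ℝ, ℂ) := ⟨fun θ ↦ L θ - n * (θ * Complex.I), by fun_prop⟩
  have hperiodic : Periodic M (2 * π) := fun θ ↦ by
    simp only [M, ContinuousMap.coe_mk, hn θ (mem_univ θ)]
    push_cast
    ring
  have hfactors : ∀ θ θ', Circle.exp θ = Circle.exp θ' → M θ = M θ' := fun θ θ' h ↦ by
    obtain ⟨m, hm⟩ := Circle.exp_eq_exp.1 h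
    rw [hm, hperiodic.int_mul m]
  have hexp := Circle.isCoveringMap_exp.isQuotientMap Circle.exp_surjective
  refine ⟨n, hexp.lift M hfactors, (hexp.lift M hfactors).continuous.continuousOn, fun z _ ↦ ?_⟩
  obtain ⟨θ, rfl⟩ := Circle.exp_surjective z
  have hlift : hexp.lift M hfactors (Circle.exp θ) = M θ :=
    DFunLike.congr_fun (hexp.lift_comp M hfactors) θ
  simp only [comp_apply, hlift, M, ContinuousMap.coe_mk, Complex.exp_sub, Complex.exp_int_mul,
    ← Circle.coe_exp]
  exact congrArg (· / _) (hLF (mem_univ θ))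

theorem exists_hasLogOn_zpow_div_zpow {F G : Circle → ℂ} (hF : Continuous F) (hG : Continuous G)
    (hF₀ : ∀ z, F z ≠ 0) (hG₀ : ∀ z, G z ≠ 0) :
    ∃ m n : ℤ, (m ≠ 0 ∨ n ≠ 0) ∧ HasLogOn (fun z ↦ F z ^ m / G z ^ n) univ := by
  obtain ⟨k, hk⟩ := exists_hasLogOn_div_circle_zpow hF hF₀
  obtain ⟨l, hl⟩ := exists_hasLogOn_div_circle_zpow hG hG₀
  by_cases hkl : l ≠ 0 ∨ k ≠ 0
  · refine ⟨l, k, hkl, ((hk.zpow l).div (hl.zpow k)).congr fun z _ ↦ ?_⟩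
    have hz : ((z : ℂ) ^ k) ^ l = ((z : ℂ) ^ l) ^ k := zpow_comm _ _ _
    simp only [div_zpow, hz]
    exact div_div_div_cancel_right₀ (zpow_ne_zero _ (zpow_ne_zero _ z.coe_ne_zero)) _ _
  · push Not at hkl
    exact ⟨1, 0, Or.inl one_ne_zero, by simpa [hkl.2] using hk⟩

theorem not_hasLogOn_div_sub {a b : ℂ} (hab : a ≠ b) :
    ¬HasLogOn (fun z ↦ (z - a) / (z - b)) {a, b}ᶜ := by
  intro h
  have hab' : a - b ≠ 0 := sub_ne_zero.2 hab
  have hslit : ∀ z : Circle, 1 + (z : ℂ) / 2 ∈ Complex.slitPlane := fun z ↦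
    Complex.mem_slitPlane_of_norm_lt_one (by rw [norm_div, z.norm_coe]; norm_num)
  -- A circle around `a` that does not enclose `b`.
  let c : Circle → ℂ := fun z ↦ a + (a - b) * (z / 2)
  have hca : ∀ z, c z - a = (a - b) * (z / 2) := fun z ↦ by simp [c]
  have hcb : ∀ z, c z - b = (a - b) * (1 + z / 2) := fun z ↦ by simp only [c]; ring
  have hmaps : MapsTo c univ {a, b}ᶜ := by
    rintro z - (hz | hz)
    · exact mul_ne_zero hab' (div_ne_zero z.coe_ne_zero two_ne_zero) (hca z ▸ sub_eq_zero.2 hz)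
    · exact mul_ne_zero hab' (Complex.slitPlane_ne_zero (hslit z)) (hcb z ▸ sub_eq_zero.2 hz)
  have hlog : HasLogOn (fun z : Circle ↦ 2 * ((c z - a) / (c z - b) * (1 + (z : ℂ) / 2))) univ :=
    (HasLogOn.const two_ne_zero).mul <| (h.comp (by fun_prop) hmaps).mul <|
      HasLogOn.of_mem_slitPlane (by fun_prop) fun z _ ↦ hslit z
  refine one_ne_zero (eq_zero_of_hasLogOn_circle_zpow (hlog.congr fun z _ ↦ ?_))
  have hz : 1 + (z : ℂ) / 2 ≠ 0 := Complex.slitPlane_ne_zero (hslit z)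
  simp only [hca, hcb, mul_div_mul_left _ _ hab', div_mul_cancel₀ _ hz, zpow_one]
  exact mul_div_cancel₀ _ two_ne_zero

end Circle

section Plane

theorem eq_zero_of_eq_sub_zpow {F : ℂ → ℂ} (hF : Continuous F) (hF₀ : ∀ z, F z ≠ 0) {p : ℂ}
    {n : ℤ} {R : ℝ} (h : ∀ z, z ∉ ball p R → F z = (z - p) ^ n) : n = 0 := by
  let r : ℝ := max R 1
  have hr : 0 < r := one_pos.trans_le (le_max_right _ _)
  have hr₀ : (r : ℂ) ≠ 0 := Complex.ofReal_ne_zero.2 hr.ne'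
  have hFr : ∀ z : Circle, F (p + r * z) = r ^ n * (z : ℂ) ^ n := fun z ↦ by
    rw [h, add_sub_cancel_left, mul_zpow]
    rw [mem_ball, dist_self_add_left, norm_mul, z.norm_coe, Complex.norm_of_nonneg hr.le, mul_one]
    exact not_lt.2 (le_max_left R 1)
  have hlog : HasLogOn (fun z : Circle ↦ F (p + r * z) / r ^ n) univ :=
    ((hasLogOn_univ hF hF₀).comp (φ := fun z : Circle ↦ p + r * z) (by fun_prop)
      (mapsTo_univ _ _)).div (HasLogOn.const (zpow_ne_zero n hr₀))
  refine eq_zero_of_hasLogOn_circle_zpow (hlog.congr fun z _ ↦ ?_)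
  simp only [hFr, mul_div_cancel_left₀ _ (zpow_ne_zero n hr₀)]

-- A logarithm on the frontier would let `(z - p) ^ n`, taken outside `U`, be continued to a
-- nonvanishing function on the plane.
theorem eq_zero_of_hasLogOn_frontier {U : Set ℂ} (hU : IsOpen U) (hUb : IsBounded U) {p : ℂ}
    (hp : p ∈ U) {G : ℂ → ℂ} (hG : ContinuousOn G (closure U)) (hG₀ : ∀ z ∈ closure U, G z ≠ 0)
    {n : ℤ} (h : HasLogOn (fun z ↦ (z - p) ^ n / G z) (frontier U)) : n = 0 := by
  classical
  obtain ⟨L, hL⟩ := h.exists_continuousMap isClosed_frontier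
  obtain ⟨R, hR⟩ := hUb.subset_ball p
  have hsub : ∀ z ∉ U, z - p ≠ 0 := fun z hz h ↦ hz (sub_eq_zero.1 h ▸ hp)
  refine eq_zero_of_eq_sub_zpow (R := R) (p := p)
    (F := U.piecewise (fun z ↦ Complex.exp (L z) * G z) fun z ↦ (z - p) ^ n) ?_ ?_ ?_
  · refine continuous_piecewise (fun z hz ↦ ?_) (by fun_prop) ?_
    · rw [← comp_apply (f := Complex.exp), hL hz,
        div_mul_cancel₀ _ (hG₀ z (frontier_subset_closure hz))]
    · rw [hU.isClosed_compl.closure_eq]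
      exact ContinuousOn.zpow₀ (by fun_prop) n fun z hz ↦ Or.inl (hsub z hz)
  · intro z
    by_cases hz : z ∈ U
    · rw [piecewise_eq_of_mem _ _ _ hz]
      exact mul_ne_zero (Complex.exp_ne_zero _) (hG₀ z (subset_closure hz))
    · rw [piecewise_eq_of_notMem _ _ _ hz]
      exact zpow_ne_zero n (hsub z hz)
  · exact fun z hz ↦ piecewise_eq_of_notMem _ _ _ fun hzU ↦ hz (hR hzU)

theorem eq_zero_of_hasLogOn_zpow_div_zpow {K : Set ℂ} (hK : IsClosed K) {p q : ℂ} (hp : p ∈ Kᶜ)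
    (hq : q ∈ Kᶜ) (hbounded : IsBounded (connectedComponentIn Kᶜ p))
    (hpq : connectedComponentIn Kᶜ p ≠ connectedComponentIn Kᶜ q) {m n : ℤ}
    (h : HasLogOn (fun z ↦ (z - p) ^ m / (z - q) ^ n) K) : m = 0 := by
  have hfrontier : frontier (connectedComponentIn Kᶜ p) ⊆ K :=
    disjoint_compl_right_iff_subset.1
      (disjoint_frontier_connectedComponentIn hK.isOpen_compl p)
  have hqclosure : q ∉ closure (connectedComponentIn Kᶜ p) := by
    rw [closure_eq_self_union_frontier]
    rintro (hqp | hqp)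
    · exact hpq (connectedComponentIn_eq hqp)
    · exact hq (hfrontier hqp)
  have hsub : ∀ z ∈ closure (connectedComponentIn Kᶜ p), z - q ≠ 0 := fun z hz h ↦
    hqclosure (sub_eq_zero.1 h ▸ hz)
  exact eq_zero_of_hasLogOn_frontier hK.isOpen_compl.connectedComponentIn hbounded
    (mem_connectedComponentIn hp)
    (ContinuousOn.zpow₀ (by fun_prop) n fun z hz ↦ Or.inl (hsub z hz))
    (fun z hz ↦ zpow_ne_zero n (hsub z hz)) (h.mono hfrontier)

-- Slide the zero of the numerator along the path, starting from the constant function `1`.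
theorem hasLogOn_compl_range_path {a b : ℂ} (γ : Path a b) :
    HasLogOn (fun z ↦ (z - b) / (z - a)) (range γ)ᶜ := by
  have hsub : ∀ t, ∀ z ∈ (range γ)ᶜ, z - γ t ≠ 0 := fun t z hz h ↦
    hz ⟨t, (sub_eq_zero.1 h).symm⟩
  have hsub₀ : ∀ z ∈ (range γ)ᶜ, z - a ≠ 0 := by simpa only [γ.source] using hsub 0
  have hstart : HasLogOn (fun z ↦ (z - γ 0) / (z - a)) (range γ)ᶜ :=
    (HasLogOn.const one_ne_zero).congr fun z hz ↦ by simp [div_self (hsub₀ z hz)]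
  have hslide : ContinuousOn (uncurry fun t z ↦ (z - γ t) / (z - a)) (univ ×ˢ (range γ)ᶜ) :=
    ContinuousOn.div (f := fun x : I × ℂ ↦ x.2 - γ x.1) (g := fun x ↦ x.2 - a)
      (by fun_prop) (by fun_prop) fun x hx ↦ hsub₀ x.2 hx.2
  simpa only [γ.target] using HasLogOn.of_homotopy hslide
    (fun t z hz ↦ div_ne_zero (hsub t z hz) (hsub₀ z hz)) hstart

theorem not_isPreconnected_compl_range_union_range {a b : ℂ} (hab : a ≠ b) (γ γ' : Path a b)
    (hinter : range γ ∩ range γ' = {a, b}) : ¬IsPreconnected (range γ ∪ range γ')ᶜ := by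
  intro h
  rw [compl_union] at h
  have hlog : HasLogOn (fun z ↦ (z - b) / (z - a)) ((range γ)ᶜ ∪ (range γ')ᶜ) :=
    (hasLogOn_compl_range_path γ).union_of_isOpen (hasLogOn_compl_range_path γ')
      (isCompact_range γ.continuous).isClosed.isOpen_compl
      (isCompact_range γ'.continuous).isClosed.isOpen_compl h
  rw [← compl_inter, hinter, pair_comm] at hlog
  exact not_hasLogOn_div_sub hab.symm hlog

end Plane

section JordanCurve

variable {ψ : Circle → ℂ}

theorem not_isPreconnected_compl_range_circle (hψ : Continuous ψ) (hinj : Injective ψ) :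
    ¬IsPreconnected (range ψ)ᶜ := by
  have hne : (1 : Circle) ≠ -1 := fun h ↦ by
    have := congrArg (fun z : Circle ↦ (z : ℂ).re) h
    norm_num at this
  let γ : Path (ψ 1) (ψ (-1)) := (Circle.path 1 (-1)).map hψ
  let γ' : Path (ψ 1) (ψ (-1)) := ((Circle.path (-1) 1).map hψ).symm
  have hγ : range γ = ψ '' range (Circle.path 1 (-1)) := range_comp ψ _
  have hγ' : range γ' = ψ '' range (Circle.path (-1) 1) :=
    (Path.symm_range _).trans (range_comp ψ _)
  have hunion : range γ ∪ range γ' = range ψ := by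
    rw [hγ, hγ', ← image_union, Circle.range_path_union_range_path hne, image_univ]
  rw [← hunion]
  refine not_isPreconnected_compl_range_union_range (hinj.ne hne) γ γ' ?_
  rw [hγ, hγ', ← image_inter hinj, Circle.range_path_inter_range_path hne, image_pair]

theorem connectedComponentIn_eq_of_isBounded (hψ : Continuous ψ) (hinj : Injective ψ) {p q : ℂ}
    (hp : p ∈ (range ψ)ᶜ) (hq : q ∈ (range ψ)ᶜ)
    (hpb : IsBounded (connectedComponentIn (range ψ)ᶜ p))
    (hqb : IsBounded (connectedComponentIn (range ψ)ᶜ q)) :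
    connectedComponentIn (range ψ)ᶜ p = connectedComponentIn (range ψ)ᶜ q := by
  by_contra hpq
  have hclosed : IsClosed (range ψ) := (isCompact_range hψ).isClosed
  obtain ⟨m, n, hmn, hlog⟩ := exists_hasLogOn_zpow_div_zpow
    (F := fun z ↦ ψ z - p) (G := fun z ↦ ψ z - q) (by fun_prop) (by fun_prop)
    (fun z h ↦ hp ⟨z, sub_eq_zero.1 h⟩) fun z h ↦ hq ⟨z, sub_eq_zero.1 h⟩
  have hlogψ : HasLogOn (fun z ↦ (z - p) ^ m / (z - q) ^ n) (range ψ) := by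
    rw [← image_univ]
    exact hlog.image (f := fun z ↦ (z - p) ^ m / (z - q) ^ n)
      (hψ.isClosedEmbedding hinj).isEmbedding
  have hm : m = 0 := eq_zero_of_hasLogOn_zpow_div_zpow hclosed hp hq hpb hpq hlogψ
  have hn : n = 0 := eq_zero_of_hasLogOn_zpow_div_zpow hclosed hq hp hqb (Ne.symm hpq)
    (by simpa only [inv_div] using hlogψ.inv)
  exact hmn.elim (· hm) (· hn)

theorem exists_connectedComponentIn_compl_range_circle_eq_pair (hψ : Continuous ψ)
    (hinj : Injective ψ) :
    ∃ C₁ C₂, connectedComponentIn (range ψ)ᶜ '' (range ψ)ᶜ = {C₁, C₂} ∧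
      IsBounded C₁ ∧ ¬IsBounded C₂ := by
  obtain ⟨C₂, ⟨hC₂, hC₂b⟩, hunique⟩ := existsUnique_not_isBounded_connectedComponentIn_compl
    (by simp [Complex.rank_real_complex]) (isCompact_range hψ).isBounded
  obtain ⟨p, hp, hpb⟩ : ∃ p ∈ (range ψ)ᶜ, IsBounded (connectedComponentIn (range ψ)ᶜ p) := by
    by_contra! hall
    refine not_isPreconnected_compl_range_circle hψ hinj
      (isPreconnected_of_subsingleton_connectedComponentIn (subsingleton_singleton.anti
        (t := {C₂}) ?_))
    exact image_subset_iff.2 fun z hz ↦ hunique _ ⟨mem_image_of_mem _ hz, hall z hz⟩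
  refine ⟨connectedComponentIn (range ψ)ᶜ p, C₂, Subset.antisymm ?_ ?_, hpb, hC₂b⟩
  · rintro _ ⟨z, hz, rfl⟩
    by_cases hzb : IsBounded (connectedComponentIn (range ψ)ᶜ z)
    · exact Or.inl (connectedComponentIn_eq_of_isBounded hψ hinj hz hp hzb hpb)
    · exact Or.inr (hunique _ ⟨mem_image_of_mem _ hz, hzb⟩)
  · exact insert_subset (mem_image_of_mem _ hp) (singleton_subset_iff.2 hC₂)

end JordanCurve

/-- **Jordan curve theorem.** If `φ : S¹ → ℝ²` is continuous and injective and
`γ = range φ` is the corresponding Jordan curve, then `ℝ² \ γ` has exactly two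
connected components, exactly one of which is bounded and exactly one of which
is unbounded. -/
theorem jordan_curve_two_components
    (φ : (Metric.sphere (0 : EuclideanSpace ℝ (Fin 2)) 1 : Set (EuclideanSpace ℝ (Fin 2))) →
        EuclideanSpace ℝ (Fin 2))
    (hφc : Continuous φ) (hφi : Function.Injective φ)
    (γ : Set (EuclideanSpace ℝ (Fin 2))) (hγ : γ = Set.range φ) :
    ∃ C₁ C₂ : Set (EuclideanSpace ℝ (Fin 2)),
      C₁ ≠ C₂ ∧
      {C | ∃ x ∈ γᶜ, C = connectedComponentIn γᶜ x} = {C₁, C₂} ∧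
      Bornology.IsBounded C₁ ∧ ¬ Bornology.IsBounded C₂ := by
  obtain ⟨e⟩ : Nonempty (ℂ ≃ₗᵢ[ℝ] EuclideanSpace ℝ (Fin 2)) := ⟨Complex.orthonormalBasisOneI.repr⟩
  obtain ⟨s⟩ : Nonempty (Circle ≃ₜ sphere (0 : EuclideanSpace ℝ (Fin 2)) 1) :=
    ⟨e.toHomeomorph.subtype fun z ↦ by simp [Submonoid.unitSphere]⟩
  obtain ⟨C₁, C₂, hC, hC₁, hC₂⟩ := exists_connectedComponentIn_compl_range_circle_eq_pair
    (ψ := e.symm ∘ φ ∘ s) (e.symm.continuous.comp (hφc.comp s.continuous))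
    (e.symm.injective.comp (hφi.comp s.injective))
  have hcompl : e.toHomeomorph '' (range (e.symm ∘ φ ∘ s))ᶜ = γᶜ := by
    rw [image_compl_eq e.toHomeomorph.bijective, ← range_comp, hγ, ← s.surjective.range_comp φ]
    congr 2
    exact funext fun z ↦ e.apply_symm_apply _
  have hcomponents : connectedComponentIn γᶜ '' γᶜ = {e '' C₁, e '' C₂} := by
    rw [← hcompl, connectedComponentIn_image_homeomorph, hC, image_pair]
    rfl
  have hbounded : IsBounded (e '' C₁) := e.lipschitz.isBounded_image hC₁
  have hunbounded : ¬IsBounded (e '' C₂) := fun h ↦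
    hC₂ ((e.antilipschitz.isBounded_preimage h).subset (subset_preimage_image e C₂))
  refine ⟨e '' C₁, e '' C₂, fun h ↦ hunbounded (h ▸ hbounded), ?_, hbounded, hunbounded⟩
  exact (Set.ext fun C ↦ exists_congr fun x ↦ and_congr_right' eq_comm).trans hcomponents
end

section
/- Let S² be the unit sphere in EuclideanSpace ℝ (Fin 3) with its standard smooth manifold structure, let π : ℝ³ → ℝ be the projection onto the last coordinate, and let ι : S² → ℝ³ be a smooth embedding (ι is ContMDiff, injective, and its differential mfderiv at each point is injective). Set f = π ∘ ι. Suppose a ≤ b are real numbers such that f has no critical values in the interval [a, b], i.e. for every x ∈ S² with f(x) ∈ [a, b] the differential mfderiv of f at x is nonzero. Then there is a bijection between the set of connected components of the subspace π⁻¹({a}) ∖ ι(S²) and the set of connected components of the subspace π⁻¹({b}) ∖ ι(S²). -/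
open Metric Manifold

noncomputable section

instance : Fact (Module.finrank ℝ (EuclideanSpace ℝ (Fin 3)) = 2 + 1) :=
  ⟨finrank_euclideanSpace_fin⟩

/-!
Over the slab `a ≤ π ≤ b` the compact submanifold `M = range ι` has tangent vectors with
`π v = 1`. A partition of unity therefore produces a `C¹` vector field `V` on the ambient space
which is tangent to `M`, is constant outside a ball, and satisfies `0 ≤ π V ≤ 1` everywhere and
`π V = 1` on the slab. The time `b - a` flow map of `V` preserves `M` and carries the plane `π = a`
onto the plane `π = b`, so it is a homeomorphism between the two slices minus `M`.

Tangency is handled through local retractions `ρ` onto `M`: a vector `v` is tangent at `p` if and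
only if `dρₚ v = v`. This makes local extension of tangent vectors immediate (`q ↦ dρ_q v`) and
reduces the invariance of `M` to Grönwall's inequality for `q - ρ q` along integral curves.
-/

section

open Set Filter Topology NNReal ContDiff

section Flow

variable {E : Type*} [NormedAddCommGroup E] [NormedSpace ℝ E] {V : E → E} {K B : ℝ≥0}

theorem exists_forall_mem_Ioo_hasDerivAt_of_lipschitzWith_of_norm_le [CompleteSpace E]
    (hK : LipschitzWith K V) (hB : ∀ x, ‖V x‖ ≤ B) (x : E) {n : ℝ} (hn : 0 < n) :
    ∃ γ : ℝ → E, γ 0 = x ∧ ∀ t ∈ Ioo (-n) n, HasDerivAt γ (V (γ t)) t := by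
  have h0 : (0 : ℝ) ∈ Icc (-n) n := ⟨neg_nonpos.2 hn.le, hn.le⟩
  have hPL : IsPicardLindelof (fun _ ↦ V) (⟨0, h0⟩ : Icc (-n) n) x (B * n.toNNReal) 0 B K :=
    .of_time_independent (fun x _ ↦ hB x) hK.lipschitzOnWith (by simp [hn.le])
  obtain ⟨γ, hγ0, hγ⟩ := hPL.exists_eq_forall_mem_Icc_hasDerivWithinAt₀
  exact ⟨γ, hγ0, fun t ht ↦
    (hγ t (Ioo_subset_Icc_self ht)).hasDerivAt (Icc_mem_nhds ht.1 ht.2)⟩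

theorem exists_isIntegralCurve_of_lipschitzWith_of_norm_le [CompleteSpace E]
    (hK : LipschitzWith K V) (hB : ∀ x, ‖V x‖ ≤ B) (x : E) :
    ∃ γ : ℝ → E, γ 0 = x ∧ IsIntegralCurve γ fun _ ↦ V := by
  have hlocal : ∀ n : ℝ, ∃ γ : ℝ → E, γ 0 = x ∧
      (0 < n → ∀ t ∈ Ioo (-n) n, HasDerivAt γ (V (γ t)) t) := fun n ↦ by
    rcases lt_or_ge 0 n with hn | hn
    · obtain ⟨γ, hγ0, hγ⟩ :=
        exists_forall_mem_Ioo_hasDerivAt_of_lipschitzWith_of_norm_le hK hB x hn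
      exact ⟨γ, hγ0, fun _ ↦ hγ⟩
    · exact ⟨fun _ ↦ x, rfl, fun h ↦ absurd h hn.not_gt⟩
  choose γ hγ0 hγ using hlocal
  have hagree : ∀ m n, 0 < m → m ≤ n → EqOn (γ m) (γ n) (Ioo (-m) m) := fun m n hm hmn ↦
    ODE_solution_unique_of_mem_Ioo (v := fun _ ↦ V) (s := fun _ ↦ univ) (t₀ := 0)
      (fun _ _ ↦ hK.lipschitzOnWith) ⟨neg_lt_zero.2 hm, hm⟩ (fun t ht ↦ ⟨hγ m hm t ht, trivial⟩)
      (fun t ht ↦ ⟨hγ n (hm.trans_le hmn) t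
        (Ioo_subset_Ioo (neg_le_neg hmn) hmn ht), trivial⟩)
      ((hγ0 m).trans (hγ0 n).symm)
  have hpos (t : ℝ) : 0 < |t| + 1 := by positivity
  have hmem (t : ℝ) : t ∈ Ioo (-(|t| + 1)) (|t| + 1) := abs_lt.1 (lt_add_one |t|)
  refine ⟨fun t ↦ γ (|t| + 1) t, hγ0 _, fun t ↦ ?_⟩
  refine (hγ _ (hpos t) t (hmem t)).congr_of_eventuallyEq ?_
  filter_upwards [Ioo_mem_nhds (hmem t).1 (hmem t).2] with s hs
  rcases le_total (|s| + 1) (|t| + 1) with h | h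
  · exact hagree _ _ (hpos s) h (hmem s)
  · exact (hagree _ _ (hpos t) h hs).symm

theorem isIntegralCurve_comp_neg {γ : ℝ → E} (hγ : IsIntegralCurve γ fun _ ↦ V) :
    IsIntegralCurve (fun t ↦ γ (-t)) fun _ x ↦ -V x := fun t ↦ by
  simpa [Function.comp_def] using (hγ (-t)).scomp t (hasDerivAt_neg t)

theorem dist_le_mul_exp_of_isIntegralCurve (hK : LipschitzWith K V) {γ₁ γ₂ : ℝ → E}
    (hγ₁ : IsIntegralCurve γ₁ fun _ ↦ V) (hγ₂ : IsIntegralCurve γ₂ fun _ ↦ V) (t : ℝ) :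
    dist (γ₁ t) (γ₂ t) ≤ dist (γ₁ 0) (γ₂ 0) * Real.exp (K * |t|) := by
  wlog ht : 0 ≤ t generalizing V γ₁ γ₂ t
  · simpa using this hK.neg (isIntegralCurve_comp_neg hγ₁) (isIntegralCurve_comp_neg hγ₂) (-t)
      (neg_nonneg.2 (not_le.1 ht).le)
  · simpa [abs_of_nonneg ht] using dist_le_of_trajectories_ODE (v := fun _ ↦ V) (fun _ ↦ hK)
      hγ₁.continuous.continuousOn (fun s _ ↦ (hγ₁ s).hasDerivWithinAt)
      hγ₂.continuous.continuousOn (fun s _ ↦ (hγ₂ s).hasDerivWithinAt) le_rfl t ⟨ht, le_rfl⟩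

theorem continuous_uncurry_of_isIntegralCurve (hK : LipschitzWith K V) {γ : E → ℝ → E}
    (hγ0 : ∀ x, γ x 0 = x) (hγ : ∀ x, IsIntegralCurve (γ x) fun _ ↦ V) :
    Continuous fun p : ℝ × E ↦ γ p.2 p.1 := by
  refine continuous_iff_continuousAt.2 fun ⟨t, x⟩ ↦ ?_
  have hlip (s : ℝ) (hs : s ∈ ball t 1) :
      LipschitzOnWith (Real.exp (K * (|t| + 1))).toNNReal (fun y ↦ γ y s) univ := by
    refine LipschitzOnWith.of_dist_le_mul fun y _ z _ ↦ ?_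
    have hs' : |s| ≤ |t| + 1 := by
      linarith [abs_sub_abs_le_abs_sub s t, (Real.dist_eq s t).symm.trans_lt hs]
    calc dist (γ y s) (γ z s)
        ≤ dist (γ y 0) (γ z 0) * Real.exp (K * |s|) :=
          dist_le_mul_exp_of_isIntegralCurve hK (hγ y) (hγ z) s
      _ ≤ dist y z * Real.exp (K * (|t| + 1)) := by rw [hγ0, hγ0]; gcongr
      _ = _ := by rw [Real.coe_toNNReal _ (Real.exp_pos _).le, mul_comm]
  refine (continuousOn_prod_of_continuousOn_lipschitzOnWith'
    (fun p : ℝ × E ↦ γ p.2 p.1) _ hlip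
    fun y _ ↦ (hγ y).continuous.continuousOn).continuousAt ?_
  exact prod_mem_nhds (ball_mem_nhds t one_pos) univ_mem

theorem exists_flow_isIntegralCurve_of_lipschitzWith_of_norm_le [CompleteSpace E]
    (hK : LipschitzWith K V) (hB : ∀ x, ‖V x‖ ≤ B) :
    ∃ φ : Flow ℝ E, ∀ x, IsIntegralCurve (fun t ↦ φ t x) fun _ ↦ V := by
  choose γ hγ0 hγ using exists_isIntegralCurve_of_lipschitzWith_of_norm_le hK hB
  have hadd (s t : ℝ) (x : E) : γ x (s + t) = γ (γ x t) s :=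
    congrFun (ODE_solution_unique_univ (v := fun _ ↦ V) (s := fun _ ↦ univ) (t₀ := 0)
      (fun _ ↦ hK.lipschitzOnWith) (fun r ↦ ⟨(hγ x).comp_add t r, trivial⟩)
      (fun r ↦ ⟨hγ (γ x t) r, trivial⟩) (by simp [hγ0])) s
  exact ⟨⟨fun t x ↦ γ x t, continuous_uncurry_of_isIntegralCurve hK hγ0 hγ, hadd, hγ0⟩, hγ⟩

end Flow

theorem eventually_nhdsGE_eq_zero_of_norm_deriv_le {E : Type*} [NormedAddCommGroup E]
    [NormedSpace ℝ E] {h h' : ℝ → E} {K t₀ : ℝ}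
    (hh : ∀ᶠ t in 𝓝 t₀, HasDerivAt h (h' t) t) (hK : ∀ᶠ t in 𝓝 t₀, ‖h' t‖ ≤ K * ‖h t‖)
    (h0 : h t₀ = 0) : ∀ᶠ t in 𝓝[≥] t₀, h t = 0 := by
  obtain ⟨b, hb, hsub⟩ := (mem_nhdsGE_iff_exists_Icc_subset (a := t₀)).1
    (mem_nhdsWithin_of_mem_nhds (hh.and hK))
  filter_upwards [Icc_mem_nhdsGE hb] using
    eq_zero_of_abs_deriv_le_mul_abs_self_of_eq_zero_right
      (fun t ht ↦ (hsub ht).1.continuousAt.continuousWithinAt)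
      (fun t ht ↦ (hsub (Ico_subset_Icc_self ht)).1.hasDerivWithinAt) h0
      fun t ht ↦ (hsub (Ico_subset_Icc_self ht)).2

theorem eventually_eq_zero_of_norm_deriv_le {E : Type*} [NormedAddCommGroup E]
    [NormedSpace ℝ E] {h h' : ℝ → E} {K t₀ : ℝ}
    (hh : ∀ᶠ t in 𝓝 t₀, HasDerivAt h (h' t) t) (hK : ∀ᶠ t in 𝓝 t₀, ‖h' t‖ ≤ K * ‖h t‖)
    (h0 : h t₀ = 0) : ∀ᶠ t in 𝓝 t₀, h t = 0 := by
  have hneg : Tendsto Neg.neg (𝓝 (-t₀)) (𝓝 t₀) := by simpa using continuous_neg.tendsto (-t₀)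
  have hleft : ∀ᶠ t in 𝓝[≥] (-t₀), h (-t) = 0 :=
    eventually_nhdsGE_eq_zero_of_norm_deriv_le (h' := fun t ↦ -h' (-t)) (K := K)
      ((hneg.eventually hh).mono fun t ht ↦ by
        simpa [Function.comp_def] using ht.scomp t (hasDerivAt_neg t))
      ((hneg.eventually hK).mono fun t ht ↦ by simpa using ht) (by simpa using h0)
  rw [← nhdsLE_sup_nhdsGE, eventually_sup]
  refine ⟨?_, eventually_nhdsGE_eq_zero_of_norm_deriv_le hh hK h0⟩
  have hneg' : Tendsto Neg.neg (𝓝[≤] t₀) (𝓝[≥] (-t₀)) := tendsto_neg_nhdsLE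
  simpa using hneg'.eventually hleft

theorem apply_eq_iff_apply_add_sub_eq_of_hasDerivAt {g g' : ℝ → ℝ} (hg : ∀ t, HasDerivAt g (g' t) t)
    (hg' : ∀ t, g' t ∈ Icc 0 1) {a b : ℝ} (hab : a ≤ b) (hone : ∀ t, g t ∈ Icc a b → g' t = 1)
    (s : ℝ) : g s = a ↔ g (s + (b - a)) = b := by
  -- Since `g` is monotone and `t ↦ g t - t` antitone, either equality confines `g` to `[a, b]` on
  -- the interval `[s, s + (b - a)]`, where its slope is `1`.
  have hmono : Monotone g := monotone_of_hasDerivAt_nonneg hg fun t ↦ (hg' t).1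
  have hanti : Antitone fun t ↦ g t - t :=
    antitone_of_hasDerivAt_nonpos (fun t ↦ (hg t).sub (hasDerivAt_id t))
      fun t ↦ sub_nonpos.2 (hg' t).2
  have hs : s ≤ s + (b - a) := by linarith
  have hle := hanti hs
  dsimp only at hle
  suffices hslab : a ≤ g s → g (s + (b - a)) ≤ b → g (s + (b - a)) - g s = b - a by
    constructor <;> intro h
    · linarith [hslab h.ge (by linarith)]
    · linarith [hslab (by linarith) h.le]
  intro ha hb
  rcases hs.eq_or_lt with hs' | hs'
  · simp [show b - a = 0 by linarith]
  obtain ⟨c, hc, hslope⟩ := exists_hasDerivAt_eq_slope g g' hs'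
    (fun t _ ↦ (hg t).continuousAt.continuousWithinAt) fun t _ ↦ hg t
  rw [hone c ⟨ha.trans (hmono hc.1.le), (hmono hc.2.le).trans hb⟩] at hslope
  rw [eq_div_iff (by linarith)] at hslope
  linarith

theorem exists_lipschitzWith_norm_le_of_hasCompactSupport_sub_const {E F : Type*}
    [NormedAddCommGroup E] [NormedSpace ℝ E] [NormedAddCommGroup F] [NormedSpace ℝ F]
    {V : E → F} {e : F} (hV : ContDiff ℝ 1 V) (hVe : HasCompactSupport fun q ↦ V q - e) :
    ∃ K B : ℝ≥0, LipschitzWith K V ∧ ∀ q, ‖V q‖ ≤ B := by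
  have hsub : ContDiff ℝ 1 fun q ↦ V q - e := hV.sub contDiff_const
  obtain ⟨K, hK⟩ := hsub.lipschitzWith_of_hasCompactSupport hVe one_ne_zero
  obtain ⟨B, hB⟩ := hVe.exists_bound_of_continuous hsub.continuous
  refine ⟨K, (B + ‖e‖).toNNReal, by simpa [lipschitzWith_iff_dist_le_mul] using hK, fun q ↦ ?_⟩
  calc ‖V q‖ ≤ ‖V q - e‖ + ‖e‖ := norm_le_norm_sub_add _ _
    _ ≤ B + ‖e‖ := by gcongr; exact hB q
    _ ≤ (B + ‖e‖).toNNReal := Real.le_coe_toNNReal _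

theorem nonempty_connectedComponents_equiv {X Y : Type*} [TopologicalSpace X] [TopologicalSpace Y]
    (h : X ≃ₜ Y) : Nonempty (ConnectedComponents X ≃ ConnectedComponents Y) := by
  have hfiber (y : Y) : IsConnected (h ⁻¹' {y}) := by
    rw [← h.image_symm, image_singleton]
    exact isConnected_singleton
  exact ⟨(h.isQuotientMap.isCoinducing.connectedComponentsHomeomorph hfiber).toEquiv⟩

section Retraction

variable {E : Type*} [NormedAddCommGroup E] [NormedSpace ℝ E] {n : ℕ∞ω} {M : Set E} {ρ : E → E}
  {p : E}

/-- `ρ` is a local `Cⁿ` retraction onto `M` near `p`. The existence of such a `ρ` at every point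
encodes that `M` is an embedded `Cⁿ` submanifold; `ρ` is a total function with arbitrary values away
from `p`, and `p` itself need not lie in `M`. -/
structure IsContDiffRetractionAt (n : ℕ∞ω) (M : Set E) (ρ : E → E) (p : E) : Prop where
  contDiffAt : ContDiffAt ℝ n ρ p
  eventually_mem : ∀ᶠ q in 𝓝 p, ρ q ∈ M
  eventually_eq : ∀ᶠ q in 𝓝 p, q ∈ M → ρ q = q

namespace IsContDiffRetractionAt

theorem eventually (h : IsContDiffRetractionAt n M ρ p) (hn : n ≠ ∞) :
    ∀ᶠ q in 𝓝 p, IsContDiffRetractionAt n M ρ q := by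
  filter_upwards [h.contDiffAt.eventually hn, eventually_eventually_nhds.2 h.eventually_mem,
    eventually_eventually_nhds.2 h.eventually_eq] with q h₁ h₂ h₃ using ⟨h₁, h₂, h₃⟩

theorem apply_eq (h : IsContDiffRetractionAt n M ρ p) (hp : p ∈ M) : ρ p = p :=
  h.eventually_eq.self_of_nhds hp

theorem hasFDerivAt (h : IsContDiffRetractionAt n M ρ p) (hn : n ≠ 0) :
    HasFDerivAt ρ (fderiv ℝ ρ p) p :=
  (h.contDiffAt.differentiableAt hn).hasFDerivAt

theorem fderiv_apply_mem_tangentConeAt (h : IsContDiffRetractionAt n M ρ p) (hn : n ≠ 0)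
    (hp : p ∈ M) (v : E) : fderiv ℝ ρ p v ∈ tangentConeAt ℝ M p := by
  have hmaps := (h.hasFDerivAt hn).hasFDerivWithinAt.mapsTo_tangent_cone (s := ρ ⁻¹' M)
  rw [tangentConeAt_of_mem_nhds (s := ρ ⁻¹' M) h.eventually_mem, h.apply_eq hp] at hmaps
  exact tangentConeAt_mono (image_preimage_subset ρ M) (hmaps (mem_univ v))

theorem mem_tangentConeAt_iff (h : IsContDiffRetractionAt n M ρ p) (hn : n ≠ 0) (hp : p ∈ M)
    {v : E} : v ∈ tangentConeAt ℝ M p ↔ fderiv ℝ ρ p v = v := by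
  refine ⟨fun hv ↦ ?_, fun hv ↦ hv ▸ h.fderiv_apply_mem_tangentConeAt hn hp v⟩
  have hid : HasFDerivWithinAt ρ (ContinuousLinearMap.id ℝ E) M p :=
    (hasFDerivWithinAt_id p M).congr_of_eventuallyEq
      (eventually_nhdsWithin_iff.2 h.eventually_eq) (h.apply_eq hp)
  exact (h.hasFDerivAt hn).hasFDerivWithinAt.unique_on hid hv

theorem convex_tangentConeAt (h : IsContDiffRetractionAt n M ρ p) (hn : n ≠ 0) (hp : p ∈ M) :
    Convex ℝ (tangentConeAt ℝ M p) := by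
  intro v hv w hw s t _ _ _
  rw [h.mem_tangentConeAt_iff hn hp] at hv hw ⊢
  rw [map_add, map_smul, map_smul, hv, hw]

theorem exists_contDiffAt_tangent_field (h : IsContDiffRetractionAt 2 M ρ p) (hp : p ∈ M) {v : E}
    (hv : v ∈ tangentConeAt ℝ M p) :
    ∃ X : E → E, ContDiffAt ℝ 1 X p ∧ X p = v ∧
      ∀ᶠ q in 𝓝 p, q ∈ M → X q ∈ tangentConeAt ℝ M q := by
  refine ⟨fun q ↦ fderiv ℝ ρ q v, ?_, (h.mem_tangentConeAt_iff two_ne_zero hp).1 hv, ?_⟩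
  · exact (h.contDiffAt.fderiv_right one_add_one_eq_two.le).clm_apply contDiffAt_const
  · filter_upwards [h.eventually (by simp)] with q hq hqM
      using hq.fderiv_apply_mem_tangentConeAt two_ne_zero hqM v

end IsContDiffRetractionAt

-- Along `γ` the defect `q - ρ q` has derivative `d q = V q - dρ_q (V q)`. As `d` vanishes on `M`,
-- `‖d q‖ = ‖d q - d (ρ q)‖ ≤ L ‖q - ρ q‖`, so Grönwall's inequality forces the defect to vanish.
theorem IsContDiffRetractionAt.eventually_mem_of_isIntegralCurve {V : E → E} {γ : ℝ → E} {t₀ : ℝ}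
    (h : IsContDiffRetractionAt 2 M ρ (γ t₀)) (hV : ContDiffAt ℝ 1 V (γ t₀))
    (hVM : ∀ᶠ q in 𝓝 (γ t₀), q ∈ M → V q ∈ tangentConeAt ℝ M q)
    (hγ : IsIntegralCurve γ fun _ ↦ V) (ht₀ : γ t₀ ∈ M) :
    ∀ᶠ t in 𝓝 t₀, γ t ∈ M := by
  set p := γ t₀
  let d : E → E := fun q ↦ V q - fderiv ℝ ρ q (V q)
  obtain ⟨L, U, hU, hL⟩ : ∃ L : ℝ≥0, ∃ U ∈ 𝓝 p, LipschitzOnWith L d U :=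
    (hV.sub ((h.contDiffAt.fderiv_right one_add_one_eq_two.le).clm_apply hV)).hasStrictFDerivAt
      one_ne_zero |>.exists_lipschitzOnWith
  have hρ : Tendsto ρ (𝓝 p) (𝓝 p) := by
    simpa [h.apply_eq ht₀] using h.contDiffAt.continuousAt.tendsto
  have hdM : ∀ᶠ q in 𝓝 p, q ∈ M → d q = 0 := by
    filter_upwards [h.eventually (by simp), hVM] with q hq hVq hqM
    exact sub_eq_zero.2 ((hq.mem_tangentConeAt_iff two_ne_zero hqM).1 (hVq hqM)).symm
  have hbound : ∀ᶠ q in 𝓝 p, ‖d q‖ ≤ L * ‖q - ρ q‖ := by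
    filter_upwards [hU, hρ hU, h.eventually_mem, hρ.eventually hdM] with q hq hρq hqM hd
    simpa [hd hqM] using hL.norm_sub_le hq hρq
  have hγt : Tendsto γ (𝓝 t₀) (𝓝 p) := (hγ t₀).continuousAt
  have hderiv : ∀ᶠ t in 𝓝 t₀, HasDerivAt (fun t ↦ γ t - ρ (γ t)) (d (γ t)) t := by
    filter_upwards [hγt.eventually (h.eventually (by simp))] with t ht
    exact (hγ t).sub ((ht.hasFDerivAt two_ne_zero).comp_hasDerivAt t (hγ t))
  filter_upwards [eventually_eq_zero_of_norm_deriv_le hderiv (hγt.eventually hbound)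
    (sub_eq_zero.2 (h.apply_eq ht₀).symm), hγt.eventually h.eventually_mem] with t ht hM
  rwa [← sub_eq_zero.1 ht] at hM

theorem mem_iff_mem_of_isIntegralCurve (hM : IsClosed M)
    (hret : ∀ p ∈ M, ∃ ρ, IsContDiffRetractionAt 2 M ρ p) {V : E → E} (hV : ContDiff ℝ 1 V)
    (hVM : ∀ q ∈ M, V q ∈ tangentConeAt ℝ M q) {γ : ℝ → E} (hγ : IsIntegralCurve γ fun _ ↦ V)
    (s t : ℝ) : γ s ∈ M ↔ γ t ∈ M := by
  have hopen : IsOpen (γ ⁻¹' M) := isOpen_iff_mem_nhds.2 fun r hr ↦ by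
    obtain ⟨ρ, hρ⟩ := hret _ hr
    exact hρ.eventually_mem_of_isIntegralCurve hV.contDiffAt (.of_forall hVM) hγ hr
  have hclopen : IsClopen (γ ⁻¹' M) := ⟨hM.preimage hγ.continuous, hopen⟩
  rcases isClopen_iff.1 hclopen with h | h <;> simp [← mem_preimage (f := γ), h]

variable {π : E →L[ℝ] ℝ} {a b : ℝ}

/-- The admissible values at `q` of a vector field tangent to `M` whose flow raises the height `π`
at a speed in `[0, 1]`, with speed exactly `1` over the slab `π ⁻¹' [a, b]`. -/
def risingTangentVectors (M : Set E) (π : E →L[ℝ] ℝ) (a b : ℝ) (q : E) : Set E :=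
  {v | (q ∈ M → v ∈ tangentConeAt ℝ M q) ∧ π v ∈ Icc 0 1 ∧ (π q ∈ Icc a b → π v = 1)}

theorem convex_risingTangentVectors (hT : ∀ q ∈ M, Convex ℝ (tangentConeAt ℝ M q)) (q : E) :
    Convex ℝ (risingTangentVectors M π a b q) := by
  rintro v ⟨hvT, hv, hv1⟩ w ⟨hwT, hw, hw1⟩ s t hs ht hst
  refine ⟨fun hq ↦ hT q hq (hvT hq) (hwT hq) hs ht hst, ?_, fun hq ↦ ?_⟩
  · rw [map_add, map_smul, map_smul]
    exact convex_Icc 0 1 hv hw hs ht hst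
  · simp [hv1 hq, hw1 hq, hst]

theorem IsContDiffRetractionAt.exists_contDiffAt_risingTangentVectors
    (h : IsContDiffRetractionAt 2 M ρ p) (hp : p ∈ M)
    (hreg : π p ∈ Icc a b → ∃ v ∈ tangentConeAt ℝ M p, π v ≠ 0) :
    ∃ X : E → E, ContDiffAt ℝ 1 X p ∧ ∀ᶠ q in 𝓝 p, X q ∈ risingTangentVectors M π a b q := by
  by_cases hpab : π p ∈ Icc a b
  · obtain ⟨v, hv, hπv⟩ := hreg hpab
    obtain ⟨X, hX, rfl, hXM⟩ := h.exists_contDiffAt_tangent_field hp hv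
    have hπX : ContDiffAt ℝ 1 (fun q ↦ π (X q)) p := π.contDiff.contDiffAt.comp p hX
    refine ⟨fun q ↦ (π (X q))⁻¹ • X q, (hπX.inv hπv).smul hX, ?_⟩
    filter_upwards [h.eventually (by simp), hXM, hπX.continuousAt.eventually_ne hπv]
      with q hq hqX hne
    have hone : π ((π (X q))⁻¹ • X q) = 1 := by simp [hne]
    refine ⟨fun hqM ↦ ?_, by simp [hone], fun _ ↦ hone⟩
    have hXq := hqX hqM
    rw [hq.mem_tangentConeAt_iff two_ne_zero hqM] at hXq ⊢
    rw [map_smul, hXq]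
  · refine ⟨0, contDiffAt_const, ?_⟩
    filter_upwards [π.continuous.continuousAt (isClosed_Icc.isOpen_compl.mem_nhds hpab)] with q hq
    exact ⟨fun hqM ↦ zero_mem_tangentConeAt (subset_closure hqM), by simp,
      fun hqab ↦ absurd hqab hq⟩

theorem exists_contDiff_risingTangentVectors [FiniteDimensional ℝ E] (hM : IsCompact M)
    (hret : ∀ p ∈ M, ∃ ρ, IsContDiffRetractionAt 2 M ρ p)
    (hreg : ∀ p ∈ M, π p ∈ Icc a b → ∃ v ∈ tangentConeAt ℝ M p, π v ≠ 0)
    {e : E} (he : π e = 1) :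
    ∃ V : E → E, ContDiff ℝ 1 V ∧ HasCompactSupport (fun q ↦ V q - e) ∧
      ∀ q, V q ∈ risingTangentVectors M π a b q := by
  obtain ⟨R, hR⟩ := hM.isBounded.subset_ball (0 : E)
  let t (q : E) : Set E := risingTangentVectors M π a b q ∩ {v | q ∉ ball 0 R → v = e}
  have ht (q : E) : Convex ℝ (t q) := by
    refine (convex_risingTangentVectors (fun q hq ↦ ?_) q).inter ?_
    · obtain ⟨ρ, hρ⟩ := hret q hq
      exact hρ.convex_tangentConeAt two_ne_zero hq
    · by_cases hq : q ∈ ball 0 R <;> simp [hq, convex_univ]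
  have hlocal (p : E) : ∃ X : E → E, ContDiffAt ℝ 1 X p ∧ ∀ᶠ q in 𝓝 p, X q ∈ t q := by
    by_cases hp : p ∈ M
    · obtain ⟨ρ, hρ⟩ := hret p hp
      obtain ⟨X, hX, hXt⟩ := hρ.exists_contDiffAt_risingTangentVectors hp (hreg p hp)
      refine ⟨X, hX, ?_⟩
      filter_upwards [hXt, isOpen_ball.mem_nhds (hR hp)] with q hq hqR
        using ⟨hq, fun h ↦ absurd hqR h⟩
    · refine ⟨fun _ ↦ e, contDiffAt_const, ?_⟩
      filter_upwards [hM.isClosed.isOpen_compl.mem_nhds hp] with q hq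
      exact ⟨⟨fun h ↦ absurd h hq, by simp [he], fun _ ↦ he⟩, fun _ ↦ rfl⟩
  obtain ⟨V, hV⟩ := exists_contMDiffMap_forall_mem_convex_of_local (n := 1) 𝓘(ℝ, E) ht fun p ↦ by
    obtain ⟨X, hX, hXt⟩ := hlocal p
    exact ⟨_, (hX.eventually (by simp)).and hXt, X,
      fun q hq ↦ hq.1.contMDiffAt.contMDiffWithinAt, fun q hq ↦ hq.2⟩
  refine ⟨V, contMDiff_iff_contDiff.1 V.contMDiff, ?_, fun q ↦ (hV q).1⟩
  refine .intro (isCompact_closedBall (0 : E) R) fun q hq ↦ ?_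
  exact sub_eq_zero.2 ((hV q).2 fun h ↦ hq (ball_subset_closedBall h))

theorem nonempty_homeomorph_slices_diff [FiniteDimensional ℝ E]
    (hM : IsCompact M) (hret : ∀ p ∈ M, ∃ ρ, IsContDiffRetractionAt 2 M ρ p) (hπ : π ≠ 0)
    (hab : a ≤ b) (hreg : ∀ p ∈ M, π p ∈ Icc a b → ∃ v ∈ tangentConeAt ℝ M p, π v ≠ 0) :
    Nonempty ((π ⁻¹' {a} \ M : Set E) ≃ₜ (π ⁻¹' {b} \ M : Set E)) := by
  have : CompleteSpace E := FiniteDimensional.complete ℝ E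
  obtain ⟨e, he⟩ : ∃ e, π e = 1 := by
    obtain ⟨v, hv⟩ := DFunLike.ne_iff.1 hπ
    exact ⟨(π v)⁻¹ • v, by simpa using inv_mul_cancel₀ hv⟩
  obtain ⟨V, hV, hVe, hVmem⟩ := exists_contDiff_risingTangentVectors hM hret hreg he
  obtain ⟨K, B, hK, hB⟩ := exists_lipschitzWith_norm_le_of_hasCompactSupport_sub_const hV hVe
  obtain ⟨φ, hφ⟩ := exists_flow_isIntegralCurve_of_lipschitzWith_of_norm_le hK hB
  have hheight (x : E) : π x = a ↔ π (φ (b - a) x) = b := by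
    simpa using apply_eq_iff_apply_add_sub_eq_of_hasDerivAt (g := fun t ↦ π (φ t x))
      (fun t ↦ π.hasFDerivAt.comp_hasDerivAt t (hφ x t)) (fun t ↦ (hVmem _).2.1) hab
      (fun t ↦ (hVmem _).2.2) 0
  have hinv (x : E) : x ∈ M ↔ φ (b - a) x ∈ M := by
    simpa using mem_iff_mem_of_isIntegralCurve hM.isClosed hret hV (fun q hq ↦ (hVmem q).1 hq)
      (hφ x) 0 (b - a)
  exact ⟨(φ.toHomeomorph (b - a)).subtype fun x ↦ and_congr (hheight x) (not_congr (hinv x))⟩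

end Retraction

section Embedding

variable {E F : Type*} [NormedAddCommGroup E] [NormedSpace ℝ E] [NormedAddCommGroup F]
  [NormedSpace ℝ F] {n : ℕ∞ω}

theorem exists_contDiffAt_leftInverse_of_hasFDerivAt_injective [FiniteDimensional ℝ E]
    {j : F → E} {y : F} {j' : F →L[ℝ] E} (hj : ContDiffAt ℝ n j y) (hn : n ≠ 0)
    (hj' : HasFDerivAt j j' y) (hinj : Function.Injective j') :
    ∃ r : E → F, ContDiffAt ℝ n r (j y) ∧ ∀ᶠ z in 𝓝 y, r (j z) = z := by
  have : FiniteDimensional ℝ F := .of_injective j'.toLinearMap hinj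
  have : CompleteSpace F := FiniteDimensional.complete ℝ F
  obtain ⟨l, hl⟩ := j'.toLinearMap.exists_leftInverse_of_injective (LinearMap.ker_eq_bot.2 hinj)
  let L : E →L[ℝ] F := l.toContinuousLinearMap
  have hLj : HasFDerivAt (L ∘ j) ((ContinuousLinearEquiv.refl ℝ F : F →L[ℝ] F)) y := by
    convert! L.hasFDerivAt.comp y hj' using 1
    ext v
    exact (LinearMap.congr_fun hl v).symm
  have hLjn : ContDiffAt ℝ n (L ∘ j) y := L.contDiff.contDiffAt.comp y hj
  refine ⟨hLjn.localInverse hLj hn ∘ L,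
    (hLjn.to_localInverse hLj hn).comp (j y) L.contDiff.contDiffAt, ?_⟩
  exact (hLjn.hasStrictFDerivAt' hLj hn).eventually_left_inverse

variable {H M : Type*} [TopologicalSpace H] {I : ModelWithCorners ℝ F H} [TopologicalSpace M]
  [ChartedSpace H M] [BoundarylessManifold I M] {ι : M → E} {x : M}

theorem contDiffAt_comp_extChartAt_symm (hι : ContMDiffAt I 𝓘(ℝ, E) n ι x) :
    ContDiffAt ℝ n (ι ∘ (extChartAt I x).symm) (extChartAt I x x) :=
  (contMDiffAt_iff.1 hι).2.contDiffAt
    (range_mem_nhds_isInteriorPoint BoundarylessManifold.isInteriorPoint)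

theorem hasFDerivAt_comp_extChartAt_symm (hι : MDifferentiableAt I 𝓘(ℝ, E) ι x) :
    HasFDerivAt (ι ∘ (extChartAt I x).symm) (mfderiv I 𝓘(ℝ, E) ι x) (extChartAt I x x) :=
  hι.hasMFDerivAt.2.hasFDerivAt
    (range_mem_nhds_isInteriorPoint BoundarylessManifold.isInteriorPoint)

theorem mfderiv_apply_mem_tangentConeAt_range (hι : MDifferentiableAt I 𝓘(ℝ, E) ι x)
    (w : TangentSpace I x) : mfderiv I 𝓘(ℝ, E) ι x w ∈ tangentConeAt ℝ (range ι) (ι x) := by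
  have hmaps := (hasFDerivAt_comp_extChartAt_symm hι).hasFDerivWithinAt.mapsTo_tangent_cone
    (s := univ)
  rw [tangentConeAt_univ, Function.comp_apply, extChartAt_to_inv] at hmaps
  exact tangentConeAt_mono ((image_univ.le).trans (range_comp_subset_range _ _))
    (hmaps (mem_univ w))

theorem exists_isContDiffRetractionAt_range [FiniteDimensional ℝ E] (hn : n ≠ 0)
    (hι : ContMDiffAt I 𝓘(ℝ, E) n ι x) (hind : IsInducing ι)
    (himm : Function.Injective (mfderiv I 𝓘(ℝ, E) ι x)) :
    ∃ ρ, IsContDiffRetractionAt n (range ι) ρ (ι x) := by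
  let ψ := (extChartAt I x).symm
  have hψ : ψ (extChartAt I x x) = x := extChartAt_to_inv x
  have hιψ : ContDiffAt ℝ n (ι ∘ ψ) (extChartAt I x x) := contDiffAt_comp_extChartAt_symm hι
  obtain ⟨r, hr, hrι⟩ := exists_contDiffAt_leftInverse_of_hasFDerivAt_injective hιψ hn
    (hasFDerivAt_comp_extChartAt_symm (hι.mdifferentiableAt hn)) himm
  rw [Function.comp_apply, hψ] at hr
  have hrx : r (ι x) = extChartAt I x x := by
    simpa only [Function.comp_apply, hψ] using hrι.self_of_nhds
  refine ⟨(ι ∘ ψ) ∘ r, .comp (ι x) (hrx ▸ hιψ) hr, .of_forall fun q ↦ mem_range_self _, ?_⟩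
  rw [← eventually_nhdsWithin_iff, ← hind.map_nhds_eq, eventually_map]
  filter_upwards [(continuousAt_extChartAt x).eventually hrι,
    extChartAt_source_mem_nhds (I := I) x] with z hz hzx
  have hψz : ψ (extChartAt I x z) = z := (extChartAt I x).left_inv hzx
  simp only [Function.comp_apply, hψz] at hz ⊢
  rw [hz, hψz]

theorem exists_mem_tangentConeAt_range_ne_zero {π : E →L[ℝ] ℝ}
    (hι : MDifferentiableAt I 𝓘(ℝ, E) ι x) (hreg : mfderiv I 𝓘(ℝ, ℝ) (π ∘ ι) x ≠ 0) :
    ∃ v ∈ tangentConeAt ℝ (range ι) (ι x), π v ≠ 0 := by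
  obtain ⟨w, hw⟩ := DFunLike.ne_iff.1 hreg
  rw [mfderiv_comp x π.mdifferentiableAt hι, ContinuousLinearMap.mfderiv_eq] at hw
  exact ⟨mfderiv I 𝓘(ℝ, E) ι x w, mfderiv_apply_mem_tangentConeAt_range hι w, hw⟩

theorem components_of_slices_equiv_of_no_critical_values_general [FiniteDimensional ℝ E]
    [CompactSpace M] (hι : ContMDiff I 𝓘(ℝ, E) 2 ι) (hinj : Function.Injective ι)
    (himm : ∀ x, Function.Injective (mfderiv I 𝓘(ℝ, E) ι x)) {π : E →L[ℝ] ℝ} (hπ : π ≠ 0)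
    {a b : ℝ} (hab : a ≤ b)
    (hreg : ∀ x, π (ι x) ∈ Icc a b → mfderiv I 𝓘(ℝ, ℝ) (π ∘ ι) x ≠ 0) :
    Nonempty (ConnectedComponents (π ⁻¹' {a} \ range ι : Set E) ≃
      ConnectedComponents (π ⁻¹' {b} \ range ι : Set E)) := by
  have hind : IsInducing ι := (hι.continuous.isClosedEmbedding hinj).isInducing
  have hret (x : M) : ∃ ρ, IsContDiffRetractionAt 2 (range ι) ρ (ι x) :=
    exists_isContDiffRetractionAt_range two_ne_zero (hι x) hind (himm x)
  have htan (x : M) (hx : π (ι x) ∈ Icc a b) :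
      ∃ v ∈ tangentConeAt ℝ (range ι) (ι x), π v ≠ 0 :=
    exists_mem_tangentConeAt_range_ne_zero (hι.mdifferentiable two_ne_zero x) (hreg x hx)
  obtain ⟨h⟩ := nonempty_homeomorph_slices_diff (isCompact_range hι.continuous)
    (forall_mem_range.2 hret) hπ hab (forall_mem_range.2 htan)
  exact nonempty_connectedComponents_equiv h

end Embedding

end

/-- Let `ι : S² → ℝ³` be a smooth embedding of the unit sphere, `π : ℝ³ → ℝ` the
projection onto the last coordinate, and `f = π ∘ ι`. If `f` has no critical values
in `[a, b]`, then there is a bijection between the connected components of the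
subspace `π⁻¹ {a} \ ι(S²)` and the connected components of `π⁻¹ {b} \ ι(S²)`
(the nesting posets `N_a` and `N_b` are isomorphic). -/
theorem components_of_slices_equiv_of_no_critical_values
    (π : EuclideanSpace ℝ (Fin 3) → ℝ) (hπ : ∀ x, π x = x 2)
    (ι : (sphere (0 : EuclideanSpace ℝ (Fin 3)) 1 : Set (EuclideanSpace ℝ (Fin 3))) →
        EuclideanSpace ℝ (Fin 3))
    (hι : ContMDiff (𝓡 2) 𝓘(ℝ, EuclideanSpace ℝ (Fin 3)) (⊤ : ℕ∞) ι)
    (hinj : Function.Injective ι)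
    (himm : ∀ x, Function.Injective (mfderiv (𝓡 2) 𝓘(ℝ, EuclideanSpace ℝ (Fin 3)) ι x))
    (f : (sphere (0 : EuclideanSpace ℝ (Fin 3)) 1 : Set (EuclideanSpace ℝ (Fin 3))) → ℝ)
    (hf : f = π ∘ ι)
    (a b : ℝ) (hab : a ≤ b)
    (hreg : ∀ x, f x ∈ Set.Icc a b → mfderiv (𝓡 2) 𝓘(ℝ, ℝ) f x ≠ 0) :
    Nonempty (ConnectedComponents (π ⁻¹' {a} \ Set.range ι : Set (EuclideanSpace ℝ (Fin 3))) ≃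
      ConnectedComponents (π ⁻¹' {b} \ Set.range ι : Set (EuclideanSpace ℝ (Fin 3)))) := by
  obtain rfl : π = EuclideanSpace.proj (𝕜 := ℝ) (2 : Fin 3) := funext hπ
  subst hf
  have hproj : (EuclideanSpace.proj 2 : EuclideanSpace ℝ (Fin 3) →L[ℝ] ℝ) ≠ 0 := fun h ↦ by
    simpa using DFunLike.congr_fun h (EuclideanSpace.single 2 1)
  exact components_of_slices_equiv_of_no_critical_values_general
    (hι.of_le (by norm_cast)) hinj himm hproj hab hreg
end
end
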